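/- arXiv:1810.05317 — 3 statements merged into one kernel-verified Lean document; each statement's English description precedes it below -/
import Mathlib

section
/- For every K ≥ 0 there exists a positive integer n such that there exist at least K pairwise non-isomorphic finite simple graphs, each of which is independence equivalent to the path P_{2n} on 2n vertices. -/
open SimpleGraph Polynomial Finset

/-- The number of independent sets of size `k` in the graph `G`. -/
noncomputable def indepCount {V : Type*} [Fintype V] (G : SimpleGraph V) (k : ℕ) : ℕ :=
  Nat.card {s : Finset V // s.card = k ∧ ∀ u ∈ s, ∀ v ∈ s, ¬ G.Adj u v}

/-- The graph `D_n`: a triangle on the vertices `0, 1, 2` together with the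
pendant path `2 - 3 - ⋯ - (n-1)`. -/
def dGraph (n : ℕ) : SimpleGraph (Fin n) :=
  SimpleGraph.fromRel (fun u v =>
    (u.val = 0 ∧ v.val = 1) ∨ (u.val = 0 ∧ v.val = 2) ∨ (u.val = 1 ∧ v.val = 2) ∨
    (2 ≤ u.val ∧ v.val = u.val + 1))

/-!
Deleting a vertex `v` from `G` gives `I(G) = I(G - v) + X * I(G - N[v])` for independence
polynomials. Hence `I(D_{m+2}) = I(P_{m+1}) + X * I(P_{m-1})`, while deleting the vertex of
`P_{2m+2}` that leaves `P_m` and `P_{m+1}` gives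
`I(P_{2m+2}) = I(P_m) * (I(P_{m+1}) + X * I(P_{m-1}))`. So `P_{2m+2}` is independence equivalent
to the disjoint union of `P_m` and `D_{m+2}`. Here `P_m` can be replaced by any graph in its class,
and `D_{m+2}` is connected, so every number of components occurring in the class of `P_m` gives one
more in the class of `P_{2m+2}`, where `P_{2m+2}` itself has a single component. Non-isomorphic
graphs are told apart by their numbers of components.
-/

section IndependencePolynomial

variable {U V W : Type*}

theorem isIndepSet_insert_iff {G : SimpleGraph V} {v : V} {s : Set V} (hv : v ∉ s) :
    G.IsIndepSet (insert v s) ↔ G.IsIndepSet s ∧ s ⊆ (insert v (G.neighborSet v))ᶜ := by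
  rw [isIndepSet_iff, isIndepSet_iff, Set.pairwise_insert_of_notMem hv]
  simp only [G.adj_comm _ v, Set.subset_def, Set.mem_compl_iff, Set.mem_insert_iff,
    mem_neighborSet]
  grind

theorem isIndepSet_sum_iff {G : SimpleGraph V} {H : SimpleGraph W} {s : Finset (V ⊕ W)} :
    (G ⊕g H).IsIndepSet s ↔ G.IsIndepSet s.toLeft ∧ H.IsIndepSet s.toRight := by
  simp [isIndepSet_iff, Set.Pairwise]

variable [Fintype U] [Fintype V] [Fintype W]

/-- The independence polynomial `∑ₖ iₖ(G) Xᵏ` of `G`, written as a sum over the independent sets. -/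
noncomputable def indepPoly (G : SimpleGraph V) : ℕ[X] :=
  open Classical in
  ∑ s with G.IsIndepSet (s : Finset V), X ^ #s

theorem coeff_indepPoly (G : SimpleGraph V) (k : ℕ) : (indepPoly G).coeff k = indepCount G k := by
  classical
  have isIndepSet_iff_forall (s : Finset V) :
      G.IsIndepSet s ↔ ∀ u ∈ s, ∀ v ∈ s, ¬ G.Adj u v :=
    ⟨fun hs u hu v hv huv => hs hu hv huv.ne huv, fun hs u hu v hv _ => hs u hu v hv⟩
  simp [indepPoly, indepCount, coeff_X_pow, isIndepSet_iff_forall, Fintype.card_subtype,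
    filter_filter, and_comm, eq_comm]

theorem indepPoly_eq_sum_subset_range {G : SimpleGraph V} {H : SimpleGraph W}
    (f : H ↪g G) :
    open Classical in
    indepPoly H = ∑ s with G.IsIndepSet (s : Finset V) ∧ (s : Set V) ⊆ Set.range f, X ^ #s := by
  classical
  have isIndepSet_map (s : Finset W) :
      G.IsIndepSet (s.map f.toEmbedding : Finset V) ↔ H.IsIndepSet s := by
    rw [coe_map, isIndepSet_iff_isAntichain_adj, isIndepSet_iff_isAntichain_adj]
    exact IsAntichain.image_relEmbedding_iff
  refine sum_nbij (Finset.map f.toEmbedding) (fun s hs => ?_) (Finset.map_injective _).injOn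
    (fun s hs => ?_) fun s _ => by rw [card_map]
  · rw [mem_filter_univ] at hs ⊢
    exact ⟨(isIndepSet_map s).2 hs, by simp⟩
  · obtain ⟨hs, hsf⟩ := (mem_filter_univ _).1 hs
    obtain ⟨t, -, rfl⟩ : ∃ t ⊆ univ, s = t.map f.toEmbedding :=
      subset_map_iff.1 (by simpa [← coe_subset] using hsf)
    exact ⟨t, (mem_filter_univ _).2 ((isIndepSet_map t).1 hs), rfl⟩

theorem indepPoly_congr {G : SimpleGraph V} {H : SimpleGraph W} (e : G ≃g H) :
    indepPoly G = indepPoly H := by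
  classical
  rw [indepPoly_eq_sum_subset_range e.toEmbedding, indepPoly]
  simp

/-- `H` plays the role of `G - v` and `K` that of `G - N[v]`. -/
theorem indepPoly_eq_add_X_mul {G : SimpleGraph V} {H : SimpleGraph U} {K : SimpleGraph W} {v : V}
    (f : H ↪g G) (hf : Set.range f = {v}ᶜ)
    (g : K ↪g G) (hg : Set.range g = (insert v (G.neighborSet v))ᶜ) :
    indepPoly G = indepPoly H + X * indepPoly K := by
  classical
  rw [indepPoly_eq_sum_subset_range f, indepPoly_eq_sum_subset_range g, indepPoly, hf, hg,
    ← sum_filter_not_add_sum_filter _ (v ∈ ·), filter_filter, filter_filter, mul_sum]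
  have notMem {s : Finset V} (hs : (s : Set V) ⊆ (insert v (G.neighborSet v))ᶜ) : v ∉ s :=
    fun hvs => hs hvs (Set.mem_insert v _)
  congr 1
  · simp
  symm
  refine sum_nbij' (insert v) (erase · v) (fun s hs => ?_) (fun s hs => ?_) (fun s hs => ?_)
    (fun s hs => ?_) (fun s hs => ?_) <;> rw [mem_filter_univ] at hs
  · rw [mem_filter_univ, coe_insert, isIndepSet_insert_iff (mem_coe.not.2 (notMem hs.2))]
    exact ⟨hs, mem_insert_self v s⟩
  · rw [mem_filter_univ, ← isIndepSet_insert_iff (mem_coe.not.2 (notMem_erase v s)),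
      ← coe_insert, insert_erase hs.2]
    exact hs.1
  · exact erase_insert (notMem hs.2)
  · exact insert_erase hs.2
  · rw [card_insert_of_notMem (notMem hs.2), pow_succ']

theorem indepPoly_sum (G : SimpleGraph V) (H : SimpleGraph W) :
    indepPoly (G ⊕g H) = indepPoly G * indepPoly H := by
  classical
  simp only [indepPoly]
  rw [sum_mul_sum, ← sum_product']
  refine sum_equiv sumEquiv.toEquiv (fun s => ?_) fun s _ => ?_
  · simp [isIndepSet_sum_iff]
  · simp [← pow_add, card_toLeft_add_card_toRight]

end IndependencePolynomial

section IndepEquiv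

variable {V W : Type*} [Fintype V] [Fintype W] {G : SimpleGraph V} {H : SimpleGraph W}

/-- Independence equivalence of finite graphs, possibly on different vertex types. -/
def IndepEquiv (G : SimpleGraph V) (H : SimpleGraph W) : Prop :=
  ∀ k, indepCount G k = indepCount H k

theorem indepEquiv_iff_indepPoly_eq : IndepEquiv G H ↔ indepPoly G = indepPoly H := by
  simp only [IndepEquiv, ← coeff_indepPoly, Polynomial.ext_iff]

theorem IndepEquiv.congr_left {U : Type*} [Fintype U] {F : SimpleGraph U} (h : IndepEquiv G H)
    (e : G ≃g F) : IndepEquiv F H := by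
  rwa [indepEquiv_iff_indepPoly_eq, ← indepPoly_congr e, ← indepEquiv_iff_indepPoly_eq]

end IndepEquiv

section Path

/-- The embedding of two disjoint paths as the initial segment and the final segment of a longer
path. -/
def pathGraphSumEmbedding {a b n : ℕ} (h : a + b < n) :
    pathGraph a ⊕g pathGraph b ↪g pathGraph n where
  toFun := Sum.elim (fun i => ⟨i, by lia⟩) (fun j => ⟨n - b + j, by lia⟩)
  inj' := by
    rintro (i | i) (j | j) <;> simp only [Sum.elim_inl, Sum.elim_inr, Fin.mk.injEq] <;> grind
  map_rel_iff' {x y} := by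
    change (pathGraph n).Adj (Sum.elim _ _ x) (Sum.elim _ _ y) ↔ _
    rcases x with i | i <;> rcases y with j | j <;>
      simp only [Sum.elim_inl, Sum.elim_inr, pathGraph_adj, sum_adj] <;> lia

theorem range_pathGraphSumEmbedding {a b n : ℕ} (h : a + b < n) :
    Set.range (pathGraphSumEmbedding h) = {u : Fin n | u < a ∨ n - b ≤ u} := by
  ext u
  constructor
  · rintro ⟨i | j, rfl⟩
    · exact .inl i.isLt
    · exact .inr (Nat.le_add_right _ _)
  · rintro (hu | hu)
    · exact ⟨.inl ⟨u, hu⟩, rfl⟩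
    · exact ⟨.inr ⟨u - (n - b), by lia⟩, Fin.ext (Nat.add_sub_cancel' hu)⟩

theorem indepPoly_pathGraph_add_add_three (a b : ℕ) :
    indepPoly (pathGraph (a + b + 3)) =
      indepPoly (pathGraph (a + 1)) * indepPoly (pathGraph (b + 1)) +
        X * (indepPoly (pathGraph a) * indepPoly (pathGraph b)) := by
  rw [← indepPoly_sum, ← indepPoly_sum]
  refine indepPoly_eq_add_X_mul (v := ⟨a + 1, by lia⟩)
    (pathGraphSumEmbedding (by lia)) ?_ (pathGraphSumEmbedding (by lia)) ?_ <;>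
  · ext u
    simp only [range_pathGraphSumEmbedding, Set.mem_ofPred_eq, Set.mem_compl_iff,
      Set.mem_singleton_iff, Set.mem_insert_iff, mem_neighborSet, pathGraph_adj, Fin.ext_iff]
    lia

theorem dGraph_adj {n : ℕ} {u v : Fin n} :
    (dGraph n).Adj u v ↔ (pathGraph n).Adj u v ∨
      (u.val = 0 ∧ v.val = 2) ∨ (v.val = 0 ∧ u.val = 2) := by
  simp only [dGraph, fromRel_adj, pathGraph_adj]
  lia

theorem dGraph_connected (n : ℕ) : (dGraph (n + 1)).Connected :=
  (pathGraph_connected n).mono fun _ _ huv => dGraph_adj.2 (.inl huv)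

/-- The embedding of a path as a final segment of `D_n` that avoids the vertex `0`. -/
def dGraphTailEmbedding {a n : ℕ} (h : a < n) : pathGraph a ↪g dGraph n where
  toFun i := ⟨n - a + i, by lia⟩
  inj' i j := by simp [Fin.ext_iff]
  map_rel_iff' {i j} := by
    change (dGraph n).Adj ⟨n - a + i, _⟩ ⟨n - a + j, _⟩ ↔ _
    simp only [dGraph_adj, pathGraph_adj]
    lia

theorem range_dGraphTailEmbedding {a n : ℕ} (h : a < n) :
    Set.range (dGraphTailEmbedding h) = {u : Fin n | n - a ≤ u} := by
  ext u
  constructor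
  · rintro ⟨i, rfl⟩
    exact Nat.le_add_right _ _
  · intro (hu : n - a ≤ u)
    exact ⟨⟨u - (n - a), by lia⟩, Fin.ext (Nat.add_sub_cancel' hu)⟩

theorem indepPoly_dGraph_add_three (n : ℕ) :
    indepPoly (dGraph (n + 3)) =
      indepPoly (pathGraph (n + 2)) + X * indepPoly (pathGraph n) := by
  refine indepPoly_eq_add_X_mul (v := 0)
    (dGraphTailEmbedding (by lia)) ?_ (dGraphTailEmbedding (by lia)) ?_ <;>
  · ext u
    simp only [range_dGraphTailEmbedding, Set.mem_ofPred_eq, Set.mem_compl_iff,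
      Set.mem_singleton_iff, Set.mem_insert_iff, mem_neighborSet, dGraph_adj, pathGraph_adj,
      Fin.ext_iff, Fin.val_zero]
    lia

theorem indepPoly_pathGraph_two_mul_add_four (n : ℕ) :
    indepPoly (pathGraph (2 * n + 4)) =
      indepPoly (pathGraph (n + 1)) * indepPoly (dGraph (n + 3)) := by
  rw [show 2 * n + 4 = n + (n + 1) + 3 by ring, indepPoly_pathGraph_add_add_three,
    indepPoly_dGraph_add_three]
  ring

theorem IndepEquiv.sum_dGraph {V : Type*} [Fintype V] {G : SimpleGraph V} {n : ℕ}
    (h : IndepEquiv G (pathGraph (n + 1))) :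
    IndepEquiv (G ⊕g dGraph (n + 3)) (pathGraph (2 * n + 4)) := by
  rw [indepEquiv_iff_indepPoly_eq] at h ⊢
  rw [indepPoly_sum, h, indepPoly_pathGraph_two_mul_add_four]

end Path

section ConnectedComponent

variable {V W : Type*}

theorem sumMap_connectedComponentMk_eq_of_adj {G : SimpleGraph V} {H : SimpleGraph W} :
    ∀ {x y : V ⊕ W}, (G ⊕g H).Adj x y →
      Sum.map G.connectedComponentMk H.connectedComponentMk x =
        Sum.map G.connectedComponentMk H.connectedComponentMk y
  | .inl _, .inl _, hxy =>
    congrArg Sum.inl (ConnectedComponent.connectedComponentMk_eq_of_adj (sum_adj_inl.1 hxy))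
  | .inr _, .inr _, hxy =>
    congrArg Sum.inr (ConnectedComponent.connectedComponentMk_eq_of_adj (sum_adj_inr.1 hxy))

/-- The connected components of a disjoint sum of graphs are those of its two summands. -/
def connectedComponentSumEquiv (G : SimpleGraph V) (H : SimpleGraph W) :
    (G ⊕g H).ConnectedComponent ≃ G.ConnectedComponent ⊕ H.ConnectedComponent where
  toFun := ConnectedComponent.lift (Sum.map G.connectedComponentMk H.connectedComponentMk)
    fun _ _ p hp => by
      clear hp
      induction p with
      | nil => rfl
      | cons hxy _ ih => exact (sumMap_connectedComponentMk_eq_of_adj hxy).trans ih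
  invFun := Sum.elim (ConnectedComponent.map Embedding.sumInl.toHom)
    (ConnectedComponent.map Embedding.sumInr.toHom)
  left_inv := ConnectedComponent.ind (by rintro (_ | _) <;> rfl)
  right_inv := by rintro (c | c) <;> induction c using ConnectedComponent.ind <;> rfl

theorem card_connectedComponent_sum [Finite V] [Finite W]
    (G : SimpleGraph V) (H : SimpleGraph W) :
    Nat.card (G ⊕g H).ConnectedComponent =
      Nat.card G.ConnectedComponent + Nat.card H.ConnectedComponent := by
  rw [Nat.card_congr (connectedComponentSumEquiv G H), Nat.card_sum]

theorem card_connectedComponent_eq_one {G : SimpleGraph V} (hG : G.Connected) :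
    Nat.card G.ConnectedComponent = 1 :=
  have := hG.nonempty
  Nat.card_eq_one_iff_unique.2
    ⟨hG.preconnected.subsingleton_connectedComponent, inferInstance⟩

end ConnectedComponent

theorem exists_indepEquiv_pathGraph_two_mul_add_four {n : ℕ} (G : SimpleGraph (Fin (n + 1)))
    (hG : IndepEquiv G (pathGraph (n + 1))) :
    ∃ H : SimpleGraph (Fin (2 * n + 4)), IndepEquiv H (pathGraph (2 * n + 4)) ∧
      Nat.card H.ConnectedComponent = Nat.card G.ConnectedComponent + 1 := by
  have card_vertices : Fintype.card (Fin (n + 1) ⊕ Fin (n + 3)) = 2 * n + 4 := by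
    simp only [Fintype.card_sum, Fintype.card_fin]
    ring
  let e := (G ⊕g dGraph (n + 3)).overFinIso card_vertices
  refine ⟨_, hG.sum_dGraph.congr_left e, ?_⟩
  rw [← Nat.card_congr e.connectedComponentEquiv, card_connectedComponent_sum,
    card_connectedComponent_eq_one (dGraph_connected _)]

theorem exists_indepEquiv_pathGraph_card_connectedComponent {j k : ℕ} (hjk : j ≤ k) :
    ∃ G : SimpleGraph (Fin (2 * (2 ^ (k + 1) - 1))),
      IndepEquiv G (pathGraph (2 * (2 ^ (k + 1) - 1))) ∧ Nat.card G.ConnectedComponent = j + 1 := by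
  induction k generalizing j with
  | zero =>
    obtain rfl : j = 0 := by lia
    exact ⟨pathGraph 2, fun _ => rfl, card_connectedComponent_eq_one (pathGraph_connected 1)⟩
  | succ k ih =>
    obtain ⟨n, hn⟩ : ∃ n, 2 * (2 ^ (k + 1) - 1) = n + 1 :=
      Nat.exists_eq_add_one.2 (by grind)
    have doubling : 2 * (2 ^ (k + 1 + 1) - 1) = 2 * n + 4 := by grind
    rw [doubling]
    rw [hn] at ih
    cases j with
    | zero =>
      exact ⟨_, fun _ => rfl, card_connectedComponent_eq_one (pathGraph_connected (2 * n + 3))⟩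
    | succ j =>
      obtain ⟨G, hG, card_G⟩ := ih (Nat.le_of_succ_le_succ hjk)
      simpa only [card_G] using exists_indepEquiv_pathGraph_two_mul_add_four G hG

theorem evenPath_class_unbounded (K : ℕ) :
    ∃ n : ℕ, 1 ≤ n ∧ ∃ Gs : Fin K → SimpleGraph (Fin (2 * n)),
      (∀ i, ∀ k, indepCount (Gs i) k = indepCount (SimpleGraph.pathGraph (2 * n)) k) ∧
      (∀ i j, i ≠ j → IsEmpty (Gs i ≃g Gs j)) := by
  choose Gs indepEquiv_path card_components using fun i : Fin K =>
    exists_indepEquiv_pathGraph_card_connectedComponent i.isLt.le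
  refine ⟨2 ^ (K + 1) - 1, by grind, Gs, indepEquiv_path, fun i j hij => ⟨fun e => hij ?_⟩⟩
  have same_card := Nat.card_congr e.connectedComponentEquiv
  rw [card_components, card_components] at same_card
  exact Fin.ext (Nat.succ_injective same_card)
end

section
/- For every n ≥ 3, if G is a connected finite simple graph such that for every k the number of independent sets of size k in G equals the number of independent sets of size k in the cycle C_n, then G is isomorphic to C_n or G is isomorphic to D_n. -/
open SimpleGraph Polynomial Finset

/-!
By Goodman's identity, the numbers of independent sets of sizes 1, 2 and 3 determine
`∑ v, (deg v - 2) ^ 2 - 2 * t`, where `t` is the number of triangles. This quantity is at most `0`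
for a 2-regular graph, so in `G` the sum of squares is at most `2 * t`. As `G` is connected and has
as many edges as vertices, it has at most one triangle, so the sum of squares is at most `2`. Since
the differences `deg v - 2` add up to `0`, either `G` is 2-regular, or it has a triangle and its
degrees are `3, 1, 2, …, 2`. In both cases deleting a suitable edge leaves a path: `C_n` is a path
with its two ends joined, and `D_n` is a path with its vertices `0` and `2` joined.
-/

section Counting

theorem card_filter_insert_insert_singleton_eq {α : Type*} [Fintype α] [DecidableEq α]
    {s : Finset α} (hs : #s = 3) : #{p : α × α × α | {p.1, p.2.1, p.2.2} = s} = 6 := by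
  obtain ⟨x, y, z, hxy, hxz, hyz, rfl⟩ := card_eq_three.1 hs
  have : ({p | {p.1, p.2.1, p.2.2} = ({x, y, z} : Finset α)} : Finset (α × α × α)) =
      {(x, y, z), (x, z, y), (y, x, z), (y, z, x), (z, x, y), (z, y, x)} := by
    ext ⟨a, b, c⟩
    simp only [mem_filter_univ, mem_insert, mem_singleton, Prod.mk.injEq, Finset.ext_iff]
    constructor
    · intro h
      have := h a
      have := h b
      have := h c
      have := h x
      have := h y
      have := h z
      grind
    · grind
  rw [this]
  simp [hxy, hxz, hyz, hxy.symm, hxz.symm, hyz.symm]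

variable {V : Type*} [Fintype V]

theorem indepCount_one (G : SimpleGraph V) : indepCount G 1 = Fintype.card V := by
  classical
  rw [indepCount, ← Nat.card_eq_fintype_card]
  refine (Nat.card_eq_of_bijective (fun v ↦ ⟨{v}, card_singleton v, by simp⟩) ⟨?_, ?_⟩).symm
  · exact fun u v h ↦ singleton_injective (congrArg Subtype.val h)
  · rintro ⟨s, hs, -⟩
    obtain ⟨v, rfl⟩ := card_eq_one.1 hs
    exact ⟨v, rfl⟩

variable [DecidableEq V] (G : SimpleGraph V) [DecidableRel G.Adj]

theorem indepCount_eq_card_cliqueFinset_compl (k : ℕ) :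
    indepCount G k = #(Gᶜ.cliqueFinset k) := by
  rw [indepCount, Nat.card_eq_fintype_card, Fintype.card_subtype]
  congr 1
  ext s
  simp only [mem_filter_univ, mem_cliqueFinset_iff, isNClique_compl, isNIndepSet_iff]
  refine ⟨fun ⟨hk, hs⟩ ↦ ⟨fun u hu v hv _ ↦ hs u hu v hv, hk⟩, fun ⟨hs, hk⟩ ↦ ⟨hk, ?_⟩⟩
  exact fun u hu v hv huv ↦ hs hu hv huv.ne huv

theorem card_cliqueFinset_two : #(G.cliqueFinset 2) = #G.edgeFinset := by
  refine (card_bij (fun e _ ↦ e.toFinset) ?_ ?_ ?_).symm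
  · refine fun e ↦ e.ind fun u v he ↦ ?_
    rw [mem_edgeFinset, mem_edgeSet] at he
    rw [Sym2.toFinset_mk_eq, mem_cliqueFinset_iff, isNClique_iff, card_pair he.ne]
    simp [he]
  · exact fun e _ f _ hef ↦ Sym2.ext fun v ↦ by simpa using Finset.ext_iff.1 hef v
  · intro s hs
    rw [mem_cliqueFinset_iff, isNClique_iff, card_eq_two] at hs
    obtain ⟨hs, u, v, huv, rfl⟩ := hs
    exact ⟨s(u, v), by simpa using hs (by simp) (by simp) huv, Sym2.toFinset_mk_eq⟩

theorem trace_adjMatrix_pow_three :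
    (G.adjMatrix ℤ ^ 3).trace = 6 * #(G.cliqueFinset 3) := by
  let T : Finset (V × V × V) := {p | G.Adj p.1 p.2.1 ∧ G.Adj p.2.1 p.2.2 ∧ G.Adj p.2.2 p.1}
  have mem_T (p : V × V × V) : p ∈ T ↔ {p.1, p.2.1, p.2.2} ∈ G.cliqueFinset 3 := by
    simp only [T, mem_filter_univ, mem_cliqueFinset_iff, is3Clique_triple_iff, G.adj_comm p.2.2]
    tauto
  have htrace : (G.adjMatrix ℤ ^ 3).trace = #T := by
    simp only [T, card_filter, Fintype.sum_prod_type, Matrix.trace, Matrix.diag_apply, pow_succ',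
      pow_zero, mul_one, Matrix.mul_apply, mul_sum, adjMatrix_apply, ite_zero_mul_ite_zero]
    push_cast
    rfl
  have hfiber : ∀ s ∈ G.cliqueFinset 3, #{p ∈ T | {p.1, p.2.1, p.2.2} = s} = 6 := by
    intro s hs
    rw [← card_filter_insert_insert_singleton_eq (G.mem_cliqueFinset_iff.1 hs).card_eq]
    congr 1
    ext p
    simp only [mem_filter, mem_univ, true_and, mem_T, and_iff_right_iff_imp]
    exact fun hp ↦ hp ▸ hs
  rw [htrace, card_eq_sum_card_fiberwise fun p ↦ (mem_T p).1, sum_congr rfl hfiber, sum_const,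
    smul_eq_mul, mul_comm]
  push_cast
  rfl

end Counting

section EdgeCount

variable {V W : Type*} [Fintype V] [Fintype W]

theorem indepCount_two_add_card_edgeFinset (G : SimpleGraph V) [DecidableRel G.Adj] :
    indepCount G 2 + #G.edgeFinset = (Fintype.card V).choose 2 := by
  classical
  have hdisj : Disjoint Gᶜ.edgeFinset G.edgeFinset := disjoint_edgeFinset.2 disjoint_compl_left
  rw [indepCount_eq_card_cliqueFinset_compl, card_cliqueFinset_two, ← card_union_of_disjoint hdisj,
    ← card_edgeFinset_top_eq_card_choose_two, ← edgeFinset_sup]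
  congr!
  exact compl_sup_eq_top

variable {G : SimpleGraph V} {H : SimpleGraph W} [DecidableRel G.Adj] [DecidableRel H.Adj]

theorem card_edgeFinset_eq_of_indepCount_two_eq (hcard : Fintype.card V = Fintype.card W)
    (h₂ : indepCount G 2 = indepCount H 2) : #G.edgeFinset = #H.edgeFinset := by
  have hG := indepCount_two_add_card_edgeFinset G
  have hH := indepCount_two_add_card_edgeFinset H
  rw [hcard] at hG
  omega

end EdgeCount

section Goodman

theorem trace_add_pow_three {n R : Type*} [Fintype n] [DecidableEq n] [CommRing R]
    (A B : Matrix n n R) :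
    ((A + B) ^ 3).trace = (A ^ 3).trace + (B ^ 3).trace + 3 * (A * (A + B) * B).trace := by
  have hABA : (A * B * A).trace = (A * A * B).trace := Matrix.trace_mul_cycle A B A
  have hBAA : (B * A * A).trace = (A * A * B).trace := (Matrix.trace_mul_cycle A A B).symm
  have hBAB : (B * A * B).trace = (A * B * B).trace := (Matrix.trace_mul_cycle A B B).symm
  have hBBA : (B * B * A).trace = (A * B * B).trace := Matrix.trace_mul_cycle B B A
  simp only [pow_succ, pow_zero, one_mul, add_mul, mul_add, Matrix.trace_add, hABA, hBAA, hBAB,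
    hBBA]
  ring

variable {V : Type*} [Fintype V] [DecidableEq V]

theorem card_cliqueFinset_top (k : ℕ) :
    #((⊤ : SimpleGraph V).cliqueFinset k) = (Fintype.card V).choose k := by
  rw [← card_univ, ← card_powersetCard]
  congr 1
  ext s
  simp [isNClique_iff, mem_powersetCard]

variable (G : SimpleGraph V) [DecidableRel G.Adj]

theorem trace_adjMatrix_mul_adjMatrix_top_mul_adjMatrix_compl :
    (G.adjMatrix ℤ * (⊤ : SimpleGraph V).adjMatrix ℤ * Gᶜ.adjMatrix ℤ).trace =
      ∑ v, (G.degree v : ℤ) * Gᶜ.degree v := by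
  have sum_adj (H : SimpleGraph V) [DecidableRel H.Adj] (u : V) :
      ∑ v, (if H.Adj u v then 1 else 0 : ℤ) = H.degree u := by
    rw [sum_boole, ← H.card_neighborFinset_eq_degree, H.neighborFinset_eq_filter]
  simp only [← sum_adj, sum_mul_sum]
  simp only [Matrix.trace, Matrix.diag_apply, Matrix.mul_assoc, Matrix.mul_apply, mul_sum,
    adjMatrix_apply]
  refine sum_congr rfl fun u _ ↦ sum_congr rfl fun v _ ↦ sum_congr rfl fun w _ ↦ ?_
  have : G.Adj u v → Gᶜ.Adj u w → v ≠ w := by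
    rintro hv hw rfl
    exact hw.2 hv
  simp only [Gᶜ.adj_comm w u, top_adj]
  split_ifs <;> simp_all

/-- Goodman's identity. -/
theorem two_mul_card_cliqueFinset_three_add_sum_degree_mul_degree_compl :
    2 * (#(G.cliqueFinset 3) + #(Gᶜ.cliqueFinset 3)) + ∑ v, G.degree v * Gᶜ.degree v =
      2 * (Fintype.card V).choose 3 := by
  have hadd : G.adjMatrix ℤ + Gᶜ.adjMatrix ℤ = (⊤ : SimpleGraph V).adjMatrix ℤ :=
    isCompl_compl.adjMatrix_add_adjMatrix_eq_adjMatrix_completeGraph ℤ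
  have h := trace_add_pow_three (G.adjMatrix ℤ) (Gᶜ.adjMatrix ℤ)
  rw [hadd, trace_adjMatrix_mul_adjMatrix_top_mul_adjMatrix_compl, trace_adjMatrix_pow_three,
    trace_adjMatrix_pow_three, trace_adjMatrix_pow_three, card_cliqueFinset_top] at h
  zify
  linarith

theorem sum_sq_degree_sub (r : ℤ) :
    ∑ v, ((G.degree v : ℤ) - r) ^ 2 = 2 * (#(G.cliqueFinset 3) + indepCount G 3) +
      2 * (Fintype.card V - 1 - 2 * r) * #G.edgeFinset + Fintype.card V * r ^ 2 -
      2 * (Fintype.card V).choose 3 := by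
  have hdegree_compl (v : V) : (Gᶜ.degree v : ℤ) = Fintype.card V - 1 - G.degree v := by
    have := G.degree_lt_card_verts v
    rw [degree_compl]
    omega
  have hsum : ∑ v, (G.degree v : ℤ) = 2 * #G.edgeFinset := by
    exact_mod_cast G.sum_degrees_eq_twice_card_edges
  have hgoodman := two_mul_card_cliqueFinset_three_add_sum_degree_mul_degree_compl G
  rw [← indepCount_eq_card_cliqueFinset_compl] at hgoodman
  zify [hdegree_compl] at hgoodman
  calc ∑ v, ((G.degree v : ℤ) - r) ^ 2
    _ = ∑ v, ((Fintype.card V - 1 - 2 * r) * (G.degree v : ℤ) + r ^ 2 -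
          G.degree v * (Fintype.card V - 1 - G.degree v)) := sum_congr rfl fun v _ ↦ by ring
    _ = _ := by
      rw [sum_sub_distrib, sum_add_distrib, ← mul_sum, hsum, sum_const, card_univ, nsmul_eq_mul]
      linarith

variable {G}
variable {W : Type*} [Fintype W] {H : SimpleGraph W} [DecidableRel H.Adj]

theorem sum_sq_degree_sub_le_two_mul_card_cliqueFinset_three {r : ℕ}
    (hH : H.IsRegularOfDegree r) (hcard : Fintype.card V = Fintype.card W)
    (h₂ : indepCount G 2 = indepCount H 2) (h₃ : indepCount G 3 ≤ indepCount H 3) :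
    ∑ v, ((G.degree v : ℤ) - r) ^ 2 ≤ 2 * #(G.cliqueFinset 3) := by
  classical
  have hsumG := sum_sq_degree_sub G r
  have hsumH := sum_sq_degree_sub H r
  simp only [hH.degree_eq, sub_self, ne_eq, OfNat.ofNat_ne_zero, not_false_eq_true, zero_pow,
    sum_const_zero] at hsumH
  rw [hcard, card_edgeFinset_eq_of_indepCount_two_eq hcard h₂] at hsumG
  zify at h₃
  linarith

end Goodman

theorem eq_zero_or_exists_of_sum_sq_le_two {ι : Type*} [Fintype ι] {z : ι → ℤ}
    (hsum : ∑ i, z i = 0) (hsq : ∑ i, z i ^ 2 ≤ 2) :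
    (∀ i, z i = 0) ∨ ∃ p q, z p = 1 ∧ z q = -1 ∧ ∀ i, i ≠ p → i ≠ q → z i = 0 := by
  classical
  refine or_iff_not_imp_left.2 fun hz ↦ ?_
  push Not at hz
  obtain ⟨i₀, hi₀⟩ := hz
  obtain ⟨p, -, hp⟩ := exists_pos_of_sum_zero_of_exists_nonzero z hsum ⟨i₀, mem_univ _, hi₀⟩
  obtain ⟨q, -, hq⟩ := exists_pos_of_sum_zero_of_exists_nonzero (-z) (by simp [hsum])
    ⟨i₀, mem_univ _, by simpa using hi₀⟩
  have hpq : p ≠ q := by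
    rintro rfl
    simp only [Pi.neg_apply] at hq
    omega
  have hle (s : Finset ι) : ∑ i ∈ s, z i ^ 2 ≤ 2 :=
    (sum_le_univ_sum_of_nonneg fun i ↦ sq_nonneg _).trans hsq
  have hpair := hle {p, q}
  rw [sum_pair hpq] at hpair
  simp only [Pi.neg_apply] at hq
  refine ⟨p, q, by nlinarith, by nlinarith, fun i hip hiq ↦ ?_⟩
  have htriple := hle {i, p, q}
  rw [sum_insert (by simp [hip, hiq]), sum_pair hpq] at htriple
  exact pow_eq_zero_iff two_ne_zero |>.1 (le_antisymm (by nlinarith) (sq_nonneg _))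

section Path

variable {V : Type*} {G : SimpleGraph V}

theorem degree_deleteEdges_singleton_lt {e : Sym2 V} {v : V} [Fintype (G.neighborSet v)]
    [Fintype ((G.deleteEdges {e}).neighborSet v)] (he : e ∈ G.edgeSet) (hv : v ∈ e) :
    (G.deleteEdges {e}).degree v < G.degree v := by
  obtain ⟨w, rfl⟩ := hv
  refine card_lt_card (ssubset_iff_of_subset ?_ |>.2 ⟨w, by simpa using he, by simp⟩)
  intro x
  simpa using fun hx _ _ ↦ hx

theorem subgraph_eq_top_of_neighborSet_subset {H : G.Subgraph} (hG : G.Connected)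
    (hne : H.verts.Nonempty) (h : ∀ v ∈ H.verts, G.neighborSet v ⊆ H.neighborSet v) : H = ⊤ := by
  obtain ⟨u, hu⟩ := hne
  have hverts (v : V) : v ∈ H.verts := (hG u v).mem_subgraphVerts (fun v hv w hw ↦ h v hv hw) hu
  refine top_le_iff.1 ⟨fun v _ ↦ hverts v, fun v w hvw ↦ h v (hverts v) ?_⟩
  simpa using hvw

variable {u v : V} {p : G.Walk u v}

theorem toSubgraph_eq_top_of_isPath_of_degree_le [G.LocallyFinite] (hG : G.Connected)
    (hp : p.IsPath) (huv : u ≠ v) (hu : G.degree u ≤ 1) (hv : G.degree v ≤ 1)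
    (hdeg : ∀ w, w ≠ u → w ≠ v → G.degree w ≤ 2) : p.toSubgraph = ⊤ := by
  have hnil : ¬ p.Nil := Walk.not_nil_of_ne huv
  have hdegree (x : V) : (G.neighborSet x).ncard = G.degree x := by
    rw [Set.ncard_eq_toFinset_card', ← neighborFinset_def, card_neighborFinset_eq_degree]
  refine subgraph_eq_top_of_neighborSet_subset hG ⟨u, p.start_mem_verts_toSubgraph⟩ fun x hx ↦ ?_
  refine (Set.eq_of_subset_of_ncard_le (p.toSubgraph.neighborSet_subset x) ?_).ge
  rw [hdegree]
  obtain ⟨i, rfl, hi⟩ := Walk.mem_support_iff_exists_getVert.1 (p.mem_verts_toSubgraph.1 hx)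
  by_cases hi₀ : i = 0
  · rwa [hi₀, p.getVert_zero, hp.neighborSet_toSubgraph_startpoint hnil, Set.ncard_singleton]
  by_cases hi₁ : i = p.length
  · rwa [hi₁, p.getVert_length, hp.neighborSet_toSubgraph_endpoint hnil, Set.ncard_singleton]
  rw [hp.ncard_neighborSet_toSubgraph_internal_eq_two hi₀ (by omega)]
  refine hdeg _ (fun h ↦ hi₀ ?_) (fun h ↦ hi₁ ?_)
  · exact hp.getVert_eq_start_iff hi |>.1 h
  · exact hp.getVert_eq_end_iff hi |>.1 h

theorem exists_iso_pathGraph_of_degree_le [Fintype V] [DecidableRel G.Adj] (hG : G.Connected)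
    (huv : u ≠ v) (hu : G.degree u ≤ 1) (hv : G.degree v ≤ 1)
    (hdeg : ∀ w, w ≠ u → w ≠ v → G.degree w ≤ 2) :
    ∃ φ : G ≃g pathGraph (Fintype.card V), (φ u : ℕ) = 0 ∧ (φ v : ℕ) + 1 = Fintype.card V := by
  classical
  obtain ⟨p, hp⟩ := hG.exists_isPath u v
  have htop := toSubgraph_eq_top_of_isPath_of_degree_le hG hp huv hu hv hdeg
  obtain ⟨θ, hθ⟩ : ∃ θ : p.toSubgraph.coe ≃g G, ∀ x, θ x = x := by
    rw [htop]
    exact ⟨Subgraph.topIso, fun _ ↦ rfl⟩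
  let ψ : pathGraph (p.length + 1) ≃g G := hp.pathGraphIsoToSubgraph.trans θ
  have hψ (i : Fin (p.length + 1)) : ψ i = p.getVert i :=
    (hθ _).trans (p.support_getElem_eq_getVert _)
  have hψu : ψ.symm u = 0 := ψ.toEquiv.symm_apply_eq.2 (by simp [hψ])
  have hψv : ψ.symm v = Fin.last _ := ψ.toEquiv.symm_apply_eq.2 (by simp [hψ])
  have hcard : Fintype.card V = p.length + 1 := by
    rw [← Fintype.card_congr ψ.toEquiv, Fintype.card_fin]
  rw [hcard]
  exact ⟨ψ.symm, by rw [hψu, Fin.val_zero], by rw [hψv, Fin.val_last]⟩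

end Path

section Triangle

variable {V : Type*} {G : SimpleGraph V} {x y z : V}

theorem connected_deleteEdges_of_adj_of_adj (hG : G.Connected) (hxz : G.Adj x z)
    (hyz : G.Adj y z) : (G.deleteEdges {s(x, y)}).Connected := by
  refine hG.connected_delete_edge_of_not_isBridge fun h ↦ isBridge_iff.1 h ?_
  rcases eq_or_ne x y with rfl | hxy
  · rfl
  have hxz' : (G.deleteEdges {s(x, y)}).Adj x z := by simp [hxz, hxy, hyz.ne']
  have hzy' : (G.deleteEdges {s(x, y)}).Adj z y := by simp [hyz.symm, hxy.symm, hxz.ne']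
  exact hxz'.reachable.trans hzy'.reachable

theorem ncard_edgeSet_deleteEdges_singleton_add_one [Finite V] {e : Sym2 V} (he : e ∈ G.edgeSet) :
    (G.deleteEdges {e}).edgeSet.ncard + 1 = G.edgeSet.ncard := by
  rw [edgeSet_deleteEdges, Set.ncard_sdiff_singleton_add_one he (Set.toFinite _)]

theorem exists_adj_adj_adj_of_isNClique_three {s : Finset V} (hs : G.IsNClique 3 s) (hx : x ∈ s) :
    ∃ y z, G.Adj x y ∧ G.Adj x z ∧ G.Adj y z := by
  classical
  obtain ⟨a, b, c, hab, hac, hbc, rfl⟩ := is3Clique_iff.1 hs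
  simp only [mem_insert, mem_singleton] at hx
  rcases hx with rfl | rfl | rfl
  · exact ⟨b, c, hab, hac, hbc⟩
  · exact ⟨a, c, hab.symm, hbc, hac⟩
  · exact ⟨a, b, hac.symm, hbc.symm, hab⟩

theorem card_cliqueFinset_three_le_one [Fintype V] [DecidableEq V] [DecidableRel G.Adj]
    (hG : G.Connected) (hE : #G.edgeFinset ≤ Fintype.card V) : #(G.cliqueFinset 3) ≤ 1 := by
  -- Removing an edge from each of two triangles would leave a connected graph with too few edges.
  refine card_le_one.2 fun s hs t ht ↦ ?_
  rw [mem_cliqueFinset_iff] at hs ht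
  by_contra hst
  obtain ⟨a, has, hat⟩ := not_subset.1 fun h ↦ hst (eq_of_subset_of_card_le h
    (ht.card_eq.trans hs.card_eq.symm).le)
  obtain ⟨b, c, hab, hac, hbc⟩ := exists_adj_adj_adj_of_isNClique_three hs has
  obtain ⟨x, y, z, hxy, hxz, hyz, rfl⟩ := is3Clique_iff.1 ht
  have hadj {v w : V} (hv : a ≠ v) (hw : a ≠ w) (h : G.Adj v w) :
      (G.deleteEdges {s(a, b)}).Adj v w := by
    simp [h, hv.symm, hw.symm]
  simp only [mem_insert, mem_singleton, not_or] at hat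
  obtain ⟨hax, hay, haz⟩ := hat
  have hconn := connected_deleteEdges_of_adj_of_adj
    (connected_deleteEdges_of_adj_of_adj hG hac hbc)
    (hadj hax haz hxz) (hadj hay haz hyz)
  have hcard := hconn.card_vert_le_card_edgeSet_add_one
  have h₁ := ncard_edgeSet_deleteEdges_singleton_add_one
    ((mem_edgeSet _).2 (hadj hax hay hxy))
  have h₂ := ncard_edgeSet_deleteEdges_singleton_add_one ((mem_edgeSet _).2 hab)
  rw [Nat.card_eq_fintype_card, Nat.card_coe_set_eq] at hcard
  rw [← Set.ncard_coe_finset, coe_edgeFinset] at hE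
  omega

end Triangle

section PathGraphSupEdge

theorem cycleGraph_eq_pathGraph_sup_edge {n : ℕ} {i j : Fin n} (hi : (i : ℕ) = 0)
    (hj : (j : ℕ) + 1 = n) : cycleGraph n = pathGraph n ⊔ edge i j := by
  have val_sub_eq_one_iff (a b : Fin n) :
      ((a - b : Fin n) : ℕ) = 1 ↔ a ≠ b ∧ ((b : ℕ) + 1 = a ∨ (a : ℕ) = 0 ∧ (b : ℕ) + 1 = n) := by
    rcases le_or_gt b a with hba | hab
    · rw [Fin.sub_val_of_le hba]
      omega
    · rw [Fin.coe_sub_iff_lt.2 hab]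
      omega
  ext a b
  simp only [cycleGraph_adj', val_sub_eq_one_iff, sup_adj, pathGraph_adj, edge_adj, Fin.ext_iff,
    ne_eq]
  omega

theorem dGraph_eq_pathGraph_sup_edge {n : ℕ} {i j : Fin n} (hi : (i : ℕ) = 0) (hj : (j : ℕ) = 2) :
    dGraph n = pathGraph n ⊔ edge i j := by
  ext a b
  simp only [dGraph, fromRel_adj, sup_adj, pathGraph_adj, edge_adj, Fin.ext_iff, ne_eq]
  omega

variable {V W : Type*} {G : SimpleGraph V} {H : SimpleGraph W} {u v : V}

theorem nonempty_iso_sup_edge_of_iso_deleteEdges (huv : G.Adj u v)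
    (φ : G.deleteEdges {s(u, v)} ≃g H) : Nonempty (G ≃g H ⊔ edge (φ u) (φ v)) := by
  refine ⟨⟨φ.toEquiv, fun {a b} ↦ ?_⟩⟩
  have hab : H.Adj (φ a) (φ b) ↔ G.Adj a b ∧ s(a, b) ≠ s(u, v) := by
    rw [φ.map_adj_iff, deleteEdges_adj, Set.mem_singleton_iff]
  have hedge : (edge (φ u) (φ v)).Adj (φ a) (φ b) ↔ s(a, b) = s(u, v) ∧ a ≠ b := by
    rw [adj_edge, ← Sym2.map_mk, ← Sym2.map_mk, (Sym2.map.injective φ.injective).eq_iff, eq_comm,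
      φ.injective.ne_iff]
  rw [RelIso.coe_fn_toEquiv, sup_adj, hab, hedge]
  have : s(a, b) = s(u, v) → G.Adj a b := fun h ↦ by rwa [← mem_edgeSet, h, mem_edgeSet]
  grind [G.ne_of_adj]

end PathGraphSupEdge

section Classification

variable {V : Type*} {G : SimpleGraph V}

theorem mem_of_isNClique_of_degree_le [G.LocallyFinite] {s : Finset V} {k : ℕ} (hG : G.Connected)
    (hs : G.IsNClique (k + 1) s) (hdeg : ∀ v ∈ s, G.degree v ≤ k) (v : V) : v ∈ s := by
  classical
  obtain ⟨u, hu⟩ : s.Nonempty := card_pos.1 (by have := hs.card_eq; omega)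
  have hclosed : ∀ x ∈ s, ∀ y, G.Adj x y → y ∈ s := by
    intro x hx y hxy
    have hsub : s.erase x ⊆ G.neighborFinset x := by
      intro z hz
      rw [mem_erase] at hz
      exact (mem_neighborFinset ..).2 (hs.isClique hx hz.2 hz.1.symm)
    have hcard : #(G.neighborFinset x) ≤ #(s.erase x) := by
      rw [card_erase_of_mem hx, hs.card_eq, card_neighborFinset_eq_degree]
      exact hdeg x hx
    have hy : y ∈ s.erase x :=
      eq_of_subset_of_card_le hsub hcard ▸ (mem_neighborFinset ..).2 hxy
    exact mem_of_mem_erase hy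
  exact (hG u v).mem_subgraphVerts (H := (⊤ : G.Subgraph).induce s)
    (fun x hx y hxy ↦ ⟨hx, hclosed x hx y hxy, hxy⟩) hu

variable [Fintype V] [DecidableRel G.Adj]

theorem card_edgeFinset_of_isRegularOfDegree_two (hG : G.IsRegularOfDegree 2) :
    #G.edgeFinset = Fintype.card V := by
  have := G.sum_degrees_eq_twice_card_edges
  simp only [hG.degree_eq, sum_const, card_univ, smul_eq_mul] at this
  omega

theorem isRegularOfDegree_two_or_exists_degree_eq (hE : #G.edgeFinset = Fintype.card V)
    (hsq : ∑ v, ((G.degree v : ℤ) - (2 : ℕ)) ^ 2 ≤ 2) :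
    G.IsRegularOfDegree 2 ∨ ∃ w l, G.degree w = 3 ∧ G.degree l = 1 ∧
      ∀ v, v ≠ w → v ≠ l → G.degree v = 2 := by
  have hsum : ∑ v, ((G.degree v : ℤ) - (2 : ℕ)) = 0 := by
    have := G.sum_degrees_eq_twice_card_edges
    zify at this
    rw [sum_sub_distrib, this, hE, sum_const, card_univ, nsmul_eq_mul]
    ring
  refine (eq_zero_or_exists_of_sum_sq_le_two hsum hsq).imp (fun h v ↦ by have := h v; omega) ?_
  rintro ⟨w, l, hw, hl, h⟩
  exact ⟨w, l, by omega, by omega, fun v hvw hvl ↦ by have := h v hvw hvl; omega⟩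

theorem nonempty_iso_cycleGraph_of_isRegularOfDegree_two (hG : G.Connected)
    (hdeg : G.IsRegularOfDegree 2) : Nonempty (G ≃g cycleGraph (Fintype.card V)) := by
  classical
  have hnontrivial : Nontrivial V := by
    obtain ⟨v⟩ := hG.nonempty
    obtain ⟨w, hw⟩ := (G.degree_pos_iff_exists_adj v).1 (by simp [hdeg.degree_eq])
    exact ⟨v, w, hw.ne⟩
  have hacyclic : ¬ G.IsAcyclic := fun h ↦ by
    obtain ⟨v, hv⟩ := IsTree.exists_vert_degree_one_of_nontrivial ⟨hG, h⟩
    simp [hdeg.degree_eq] at hv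
  rw [isAcyclic_iff_forall_adj_isBridge] at hacyclic
  push Not at hacyclic
  obtain ⟨u, v, huv, hbridge⟩ := hacyclic
  have hlt (w : V) (hw : w ∈ s(u, v)) : (G.deleteEdges {s(u, v)}).degree w ≤ 1 := by
    have := degree_deleteEdges_singleton_lt ((mem_edgeSet _).2 huv) hw
    rw [hdeg.degree_eq] at this
    omega
  obtain ⟨φ, hu, hv⟩ := exists_iso_pathGraph_of_degree_le
    (hG.connected_delete_edge_of_not_isBridge hbridge) huv.ne
    (hlt u (Sym2.mem_mk_left u v)) (hlt v (Sym2.mem_mk_right u v)) fun w _ _ ↦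
      (degree_le_of_le (deleteEdges_le _)).trans (hdeg w).le
  rw [cycleGraph_eq_pathGraph_sup_edge hu hv]
  exact nonempty_iso_sup_edge_of_iso_deleteEdges huv φ

theorem one_lt_degree_of_adj_of_adj {v a b : V} (ha : G.Adj v a) (hb : G.Adj v b) (hab : a ≠ b) :
    1 < G.degree v := by
  rw [← card_neighborFinset_eq_degree]
  exact one_lt_card.2 ⟨a, by simpa, b, by simpa, hab⟩

theorem nonempty_iso_dGraph_of_adj_of_degree_le {w l x y : V} (hG : G.Connected)
    (hwx : G.Adj w x) (hwy : G.Adj w y) (hxy : G.Adj x y) (hw : G.degree w ≤ 3)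
    (hl : G.degree l ≤ 1) (hdeg : ∀ v, v ≠ w → v ≠ l → G.degree v ≤ 2) :
    Nonempty (G ≃g dGraph (Fintype.card V)) := by
  classical
  have hxl : x ≠ l := by
    rintro rfl
    exact hl.not_gt (one_lt_degree_of_adj_of_adj hwx.symm hxy hwy.ne)
  have hlt (v : V) (hv : v ∈ s(x, w)) : (G.deleteEdges {s(x, w)}).degree v < G.degree v :=
    degree_deleteEdges_singleton_lt ((mem_edgeSet G).2 hwx.symm) hv
  have hle (v : V) : (G.deleteEdges {s(x, w)}).degree v ≤ G.degree v :=
    degree_le_of_le (deleteEdges_le _)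
  have hx : (G.deleteEdges {s(x, w)}).degree x ≤ 1 :=
    Nat.le_of_lt_succ ((hlt x (Sym2.mem_mk_left x w)).trans_le (hdeg x hwx.ne' hxl))
  have hw : (G.deleteEdges {s(x, w)}).degree w ≤ 2 :=
    Nat.le_of_lt_succ ((hlt w (Sym2.mem_mk_right x w)).trans_le hw)
  obtain ⟨φ, hφx, -⟩ := exists_iso_pathGraph_of_degree_le
    (connected_deleteEdges_of_adj_of_adj hG hxy hwy) hxl hx ((hle l).trans hl) fun v _ hvl ↦ by
      rcases eq_or_ne v w with rfl | hvw
      · exact hw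
      · exact (hle v).trans (hdeg v hvw hvl)
  have hφxy : (pathGraph _).Adj (φ x) (φ y) :=
    φ.map_adj_iff.2 (by simp [hxy, hxy.ne', hwy.ne'])
  have hφyw : (pathGraph _).Adj (φ y) (φ w) :=
    φ.map_adj_iff.2 (by simp [hwy.symm, hxy.ne', hwy.ne'])
  have hφxw : (φ x : ℕ) ≠ φ w := Fin.val_ne_of_ne (φ.injective.ne hwx.ne')
  rw [pathGraph_adj] at hφxy hφyw
  rw [dGraph_eq_pathGraph_sup_edge hφx (show (φ w : ℕ) = 2 by omega)]
  exact nonempty_iso_sup_edge_of_iso_deleteEdges hwx.symm φ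

theorem nonempty_iso_dGraph_of_isNClique_of_degree_le {s : Finset V} {w l : V} (hG : G.Connected)
    (hs : G.IsNClique 3 s) (hw : G.degree w ≤ 3) (hl : G.degree l ≤ 1)
    (hdeg : ∀ v, v ≠ w → v ≠ l → G.degree v ≤ 2) :
    Nonempty (G ≃g dGraph (Fintype.card V)) := by
  have hls : l ∉ s := fun h ↦ by
    obtain ⟨a, b, ha, hb, hab⟩ := exists_adj_adj_adj_of_isNClique_three hs h
    exact hl.not_gt (one_lt_degree_of_adj_of_adj ha hb hab.ne)
  have hws : w ∈ s := by
    by_contra hws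
    exact hls (mem_of_isNClique_of_degree_le hG hs
      (fun v hv ↦ hdeg v (ne_of_mem_of_not_mem hv hws) (ne_of_mem_of_not_mem hv hls)) l)
  obtain ⟨x, y, hwx, hwy, hxy⟩ := exists_adj_adj_adj_of_isNClique_three hs hws
  exact nonempty_iso_dGraph_of_adj_of_degree_le hG hwx hwy hxy hw hl hdeg

end Classification

theorem connected_indepEquiv_cycle_general {V W : Type*} [Fintype V] [Fintype W]
    (G : SimpleGraph V) (H : SimpleGraph W) [DecidableRel H.Adj] (hconn : G.Connected)
    (hH : H.IsRegularOfDegree 2) (h₁ : indepCount G 1 = indepCount H 1)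
    (h₂ : indepCount G 2 = indepCount H 2) (h₃ : indepCount G 3 ≤ indepCount H 3) :
    Nonempty (G ≃g cycleGraph (Fintype.card W)) ∨ Nonempty (G ≃g dGraph (Fintype.card W)) := by
  classical
  rw [indepCount_one, indepCount_one] at h₁
  rw [← h₁]
  have hE : #G.edgeFinset = Fintype.card V := by
    rw [card_edgeFinset_eq_of_indepCount_two_eq h₁ h₂, h₁,
      card_edgeFinset_of_isRegularOfDegree_two hH]
  have hsq := sum_sq_degree_sub_le_two_mul_card_cliqueFinset_three hH h₁ h₂ h₃
  have htriangle := card_cliqueFinset_three_le_one hconn hE.le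
  obtain hreg | ⟨w, l, hw, hl, hdeg⟩ :=
    isRegularOfDegree_two_or_exists_degree_eq hE (hsq.trans (by norm_cast; omega))
  · exact .inl (nonempty_iso_cycleGraph_of_isRegularOfDegree_two hconn hreg)
  · have hpos : 0 < ∑ v, ((G.degree v : ℤ) - (2 : ℕ)) ^ 2 :=
      sum_pos' (fun v _ ↦ sq_nonneg _) ⟨w, mem_univ w, by simp [hw]⟩
    obtain ⟨s, hs⟩ : (G.cliqueFinset 3).Nonempty := card_pos.1 (by omega)
    exact .inr (nonempty_iso_dGraph_of_isNClique_of_degree_le hconn (G.mem_cliqueFinset_iff.1 hs)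
      hw.le hl.le fun v hvw hvl ↦ (hdeg v hvw hvl).le)

theorem connected_indepEquiv_cycle {V : Type*} [Fintype V] (G : SimpleGraph V) (n : ℕ)
    (hn : 3 ≤ n) (hconn : G.Connected)
    (h : ∀ k, indepCount G k = indepCount (SimpleGraph.cycleGraph n) k) :
    Nonempty (G ≃g SimpleGraph.cycleGraph n) ∨ Nonempty (G ≃g dGraph n) := by
  obtain ⟨m, rfl⟩ := Nat.exists_eq_add_of_le' hn
  exact Fintype.card_fin (m + 3) ▸ connected_indepEquiv_cycle_general G (cycleGraph (m + 3)) hconn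
    (fun _ ↦ cycleGraph_degree_three_le) (h 1) (h 2) (h 3).le
end

section
/- For every n ≥ 3, the real numbers r_i = −1/(2(1 + cos((2i−1)π/n))) for i = 1, 2, …, ⌊n/2⌋ are pairwise distinct, and each r_i is a root of the independence polynomial of the cycle C_n; since this polynomial has degree ⌊n/2⌋, these are exactly its roots. -/
open SimpleGraph Polynomial Finset

/-- The independence polynomial of `G`, as a polynomial over `ℝ`. -/
noncomputable def indepPolyR {V : Type*} [Fintype V] (G : SimpleGraph V) : Polynomial ℝ :=
  ∑ k ∈ Finset.range (Fintype.card V + 1), Polynomial.C ((indepCount G k : ℝ)) * Polynomial.X ^ k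

/-- The claimed roots of the independence polynomial of the cycle `C_n`. -/
noncomputable def cycleRoot (n i : ℕ) : ℝ :=
  -(1 / (2 * (1 + Real.cos ((2 * (i : ℝ) - 1) * Real.pi / (n : ℝ)))))

/-!
Deleting a vertex `v` from a graph gives `i(G, x) = i(G - v, x) + x i(G - N[v], x)`. Once `x` is
written as `-1 / y ^ 2`, this turns paths into Chebyshev polynomials, `y ^ (n + 1) i(P_n, x) =
S_{n+1}(y)`, and deleting one vertex of the cycle on `n` vertices shows that its independence
polynomial satisfies `y ^ n i(x) = S_n(y) - S_{n-2}(y)`. The right-hand side is the Chebyshev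
polynomial whose value at `2 cos φ` is `2 cos (n φ)`, so every `φ` with `cos (n φ) = 0` and
`cos φ ≠ 0` gives the root `-1 / (2 cos φ) ^ 2 = -1 / (2 (1 + cos 2φ))`. The degree is the
independence number.
-/

section IndepPoly

variable {V W W₁ W₂ : Type*} (G : SimpleGraph V)

lemma isIndepSet_iff_forall_not_adj {s : Set V} :
    G.IsIndepSet s ↔ ∀ u ∈ s, ∀ v ∈ s, ¬ G.Adj u v :=
  ⟨fun h _ hu _ hv huv => h hu hv huv.ne huv, fun h _ hu _ hv _ => h _ hu _ hv⟩

lemma isIndepSet_map_iff_comap (f : W ↪ V) (s : Finset W) :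
    G.IsIndepSet (s.map f : Finset V) ↔ (G.comap f).IsIndepSet s := by
  simp only [isIndepSet_iff_forall_not_adj, Finset.coe_map, Set.forall_mem_image, comap_adj]

lemma isIndepSet_insert_iff_s16 {s : Set V} {v : V} :
    G.IsIndepSet (insert v s) ↔ G.IsIndepSet s ∧ ∀ u ∈ s, ¬ G.Adj v u := by
  simp only [isIndepSet_iff_forall_not_adj, Set.forall_mem_insert, G.irrefl, not_false_eq_true,
    true_and, G.adj_comm _ v, forall_and]
  tauto

variable [Fintype V] [Fintype W] [Fintype W₁] [Fintype W₂]

open Classical in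
lemma indepCount_eq_card_isNIndepSet (k : ℕ) :
    indepCount G k = #{s : Finset V | G.IsNIndepSet k s} := by
  rw [indepCount, Nat.card_eq_fintype_card, Fintype.card_subtype]
  simp only [isNIndepSet_iff, isIndepSet_iff_forall_not_adj, Finset.mem_coe, and_comm]

lemma indepCount_ne_zero_iff {k : ℕ} :
    indepCount G k ≠ 0 ↔ ∃ s : Finset V, G.IsNIndepSet k s := by
  classical
  simp [indepCount_eq_card_isNIndepSet, Finset.filter_eq_empty_iff]

open Classical in
lemma indepPolyR_eq_sum_isIndepSet :
    indepPolyR G = ∑ s ∈ {s : Finset V | G.IsIndepSet s}, X ^ #s := by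
  have card_mem (s : Finset V) : #s ∈ Finset.range (Fintype.card V + 1) :=
    Finset.mem_range_succ_iff.2 s.card_le_univ
  rw [indepPolyR, ← Finset.sum_fiberwise_of_maps_to fun s _ => card_mem s]
  refine Finset.sum_congr rfl fun k _ => ?_
  rw [Finset.sum_congr rfl fun s hs => by rw [(Finset.mem_filter.1 hs).2], Finset.sum_const,
    Finset.filter_filter, indepCount_eq_card_isNIndepSet, nsmul_eq_mul, map_natCast]
  simp only [isNIndepSet_iff]

lemma coeff_indepPolyR (k : ℕ) : (indepPolyR G).coeff k = indepCount G k := by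
  classical
  rw [indepPolyR_eq_sum_isIndepSet, indepCount_eq_card_isNIndepSet]
  simp only [finsetSum_coeff, coeff_X_pow, Finset.sum_boole, Finset.filter_filter,
    isNIndepSet_iff, eq_comm]

theorem natDegree_indepPolyR : (indepPolyR G).natDegree = G.indepNum := by
  refine natDegree_eq_of_le_of_coeff_ne_zero (natDegree_le_iff_coeff_eq_zero.2 fun k hk => ?_) ?_
  · rw [coeff_indepPolyR, Nat.cast_eq_zero]
    by_contra hne
    obtain ⟨s, hs⟩ := (indepCount_ne_zero_iff G).1 hne
    exact hk.not_ge (hs.card_eq ▸ hs.isIndepSet.card_le_indepNum)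
  · rw [coeff_indepPolyR, Nat.cast_ne_zero, indepCount_ne_zero_iff]
    exact G.exists_isNIndepSet_indepNum

lemma indepPolyR_bot : indepPolyR (⊥ : SimpleGraph V) = (X + 1) ^ Fintype.card V := by
  classical
  rw [indepPolyR_eq_sum_isIndepSet, ← Fintype.sum_pow_mul_eq_add_pow]
  simp [isIndepSet_iff_forall_not_adj]

open Classical in
lemma indepPolyR_comap (f : W ↪ V) :
    indepPolyR (G.comap f) =
      ∑ s ∈ {s : Finset V | G.IsIndepSet s ∧ ↑s ⊆ Set.range f}, X ^ #s := by
  rw [indepPolyR_eq_sum_isIndepSet]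
  refine Finset.sum_nbij (Finset.map f) (fun s hs => ?_) (Finset.map_injective f).injOn
    (fun t ht => ?_) (fun s _ => by rw [Finset.card_map])
  · simp only [Finset.mem_filter_univ] at hs ⊢
    exact ⟨(isIndepSet_map_iff_comap G f s).2 hs, by simp⟩
  · simp only [Finset.coe_filter_univ, Set.mem_ofPred_eq] at ht
    obtain ⟨s, rfl⟩ : ∃ s : Finset W, s.map f = t := by
      obtain ⟨s, -, hs⟩ := Finset.subset_set_image_iff.1 (Set.image_univ.symm ▸ ht.2)
      exact ⟨s, (Finset.map_eq_image f s).trans hs⟩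
    exact ⟨s, by simpa using (isIndepSet_map_iff_comap G f s).1 ht.1, rfl⟩

open Classical in
lemma sum_isIndepSet_mem (v : V) :
    ∑ s ∈ {s : Finset V | G.IsIndepSet s ∧ v ∈ s}, (X : ℝ[X]) ^ #s =
      X * ∑ s ∈ {s : Finset V | G.IsIndepSet s ∧ ↑s ⊆ {u | u ≠ v ∧ ¬ G.Adj v u}},
        X ^ #s := by
  rw [Finset.mul_sum]
  refine (Finset.sum_nbij' (insert v) (Finset.erase · v) ?_ ?_ ?_ ?_ ?_).symm
  all_goals simp only [Finset.mem_filter_univ, Finset.coe_insert, isIndepSet_insert_iff_s16]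
  · exact fun s hs => ⟨⟨hs.1, fun u hu => (hs.2 hu).2⟩, Finset.mem_insert_self v s⟩
  · rintro s ⟨hs, hv⟩
    rw [← Finset.insert_erase hv, Finset.coe_insert, isIndepSet_insert_iff_s16] at hs
    exact ⟨hs.1, fun u hu => ⟨Finset.ne_of_mem_erase hu, hs.2 u hu⟩⟩
  · exact fun s hs => Finset.erase_insert fun hv => (hs.2 hv).1 rfl
  · exact fun s hs => Finset.insert_erase hs.2
  · exact fun s hs => by rw [Finset.card_insert_of_notMem fun hv => (hs.2 hv).1 rfl, pow_succ']

theorem indepPolyR_eq_comap_add_X_mul_comap (v : V) (f : W₁ ↪ V) (hf : Set.range f = {v}ᶜ)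
    (g : W₂ ↪ V) (hg : Set.range g = {u | u ≠ v ∧ ¬ G.Adj v u}) :
    indepPolyR G = indepPolyR (G.comap f) + X * indepPolyR (G.comap g) := by
  classical
  rw [indepPolyR_comap, indepPolyR_comap, hf, hg, ← sum_isIndepSet_mem,
    indepPolyR_eq_sum_isIndepSet, ← Finset.sum_filter_not_add_sum_filter _ (v ∈ ·),
    Finset.filter_filter, Finset.filter_filter]
  simp only [Set.subset_compl_singleton_iff, Finset.mem_coe]

end IndepPoly

section PathAndCycle

/-- The embedding `i ↦ c + i` of `Fin m` into `Fin n`, which places a path on `m` vertices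
inside a longer path or a cycle. -/
def finShift {m n : ℕ} (c : ℕ) (h : c + m ≤ n) : Fin m ↪ Fin n where
  toFun i := ⟨c + i, by omega⟩
  inj' i j hij := by simpa [Fin.ext_iff] using hij

lemma val_finShift {m n c : ℕ} (h : c + m ≤ n) (i : Fin m) : (finShift c h i).val = c + i := rfl

lemma range_finShift {m n c : ℕ} (h : c + m ≤ n) :
    Set.range (finShift c h) = {u | c ≤ u.val ∧ u.val < c + m} := by
  ext u
  simp only [Set.mem_range, Set.mem_ofPred_eq, Fin.ext_iff, val_finShift]
  exact ⟨by rintro ⟨i, hi⟩; omega, fun hu => ⟨⟨u - c, by omega⟩, Nat.add_sub_of_le hu.1⟩⟩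

lemma range_finShift_zero (n : ℕ) :
    Set.range (finShift (m := n) 0 (by omega)) = ({Fin.last n}ᶜ : Set (Fin (n + 1))) := by
  ext u
  simp only [range_finShift, Set.mem_ofPred_eq, Set.mem_compl_singleton_iff, ne_eq, Fin.ext_iff,
    Fin.val_last]
  omega

lemma cycleGraph_adj_iff_val {n : ℕ} (hn : 2 ≤ n) (u v : Fin n) :
    (cycleGraph n).Adj u v ↔ u.val + 1 = v.val ∨ v.val + 1 = u.val ∨
      (u.val = 0 ∧ v.val + 1 = n) ∨ (v.val = 0 ∧ u.val + 1 = n) := by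
  have hu := u.isLt
  have hv := v.isLt
  rw [cycleGraph_adj']
  rcases lt_trichotomy u v with h | rfl | h
  · rw [Fin.coe_sub_iff_lt.2 h, Fin.coe_sub_iff_le.2 h.le]
    omega
  · rw [Fin.coe_sub_iff_le.2 le_rfl]
    omega
  · rw [Fin.coe_sub_iff_lt.2 h, Fin.coe_sub_iff_le.2 h.le]
    omega

lemma comap_finShift_pathGraph {m n c : ℕ} (h : c + m ≤ n) :
    (pathGraph n).comap (finShift c h) = pathGraph m := by
  ext i j
  simp only [comap_adj, pathGraph_adj, val_finShift]
  omega

lemma comap_finShift_cycleGraph {m n c : ℕ} (hn : 2 ≤ n) (h : c + m < n) :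
    (cycleGraph n).comap (finShift c h.le) = pathGraph m := by
  ext i j
  simp only [comap_adj, pathGraph_adj, cycleGraph_adj_iff_val hn, val_finShift]
  omega

lemma indepPolyR_pathGraph_zero : indepPolyR (pathGraph 0) = 1 := by
  rw [Subsingleton.elim (pathGraph 0) ⊥, indepPolyR_bot, Fintype.card_fin, pow_zero]

lemma indepPolyR_pathGraph_one : indepPolyR (pathGraph 1) = X + 1 := by
  rw [Subsingleton.elim (pathGraph 1) ⊥, indepPolyR_bot, Fintype.card_fin, pow_one]

lemma indepPolyR_pathGraph_add_two (n : ℕ) :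
    indepPolyR (pathGraph (n + 2)) =
      indepPolyR (pathGraph (n + 1)) + X * indepPolyR (pathGraph n) := by
  have range_nonneighbors : Set.range (finShift (m := n) (n := n + 2) 0 (by omega)) =
      {u | u ≠ Fin.last (n + 1) ∧ ¬ (pathGraph (n + 2)).Adj (Fin.last (n + 1)) u} := by
    ext u
    simp only [range_finShift, Set.mem_ofPred_eq, pathGraph_adj, Fin.ext_iff, Fin.val_last, ne_eq]
    omega
  rw [indepPolyR_eq_comap_add_X_mul_comap _ _ _ (range_finShift_zero (n + 1)) _
    range_nonneighbors, comap_finShift_pathGraph, comap_finShift_pathGraph]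

lemma indepPolyR_cycleGraph_add_three (n : ℕ) :
    indepPolyR (cycleGraph (n + 3)) =
      indepPolyR (pathGraph (n + 2)) + X * indepPolyR (pathGraph n) := by
  have two_le : 2 ≤ n + 3 := by omega
  have range_nonneighbors : Set.range (finShift (m := n) (n := n + 3) 1 (by omega)) =
      {u | u ≠ Fin.last (n + 2) ∧ ¬ (cycleGraph (n + 3)).Adj (Fin.last (n + 2)) u} := by
    ext u
    simp only [range_finShift, Set.mem_ofPred_eq, cycleGraph_adj_iff_val two_le, Fin.ext_iff,
      Fin.val_last, ne_eq, and_true]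
    omega
  rw [indepPolyR_eq_comap_add_X_mul_comap _ _ _ (range_finShift_zero (n + 2)) _
    range_nonneighbors, comap_finShift_cycleGraph two_le (by omega),
    comap_finShift_cycleGraph two_le (by omega)]

lemma two_mul_card_le_of_isIndepSet_cycleGraph {n : ℕ} (hn : 2 ≤ n) {s : Finset (Fin n)}
    (hs : (cycleGraph n).IsIndepSet s) : 2 * #s ≤ n := by
  obtain ⟨m, rfl⟩ := Nat.exists_eq_add_of_le' hn
  rw [isIndepSet_iff_forall_not_adj] at hs
  have disjoint_shift : Disjoint s (s.map (addRightEmbedding 1)) := by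
    rw [Finset.disjoint_left]
    intro u hu hu'
    obtain ⟨v, hv, rfl⟩ := Finset.mem_map.1 hu'
    exact hs _ hu v hv (by simp [cycleGraph_adj])
  have := (s.disjUnion _ disjoint_shift).card_le_univ
  rw [Finset.card_disjUnion, Finset.card_map, Fintype.card_fin] at this
  omega

lemma exists_isNIndepSet_cycleGraph {n : ℕ} (hn : 2 ≤ n) :
    ∃ s, (cycleGraph n).IsNIndepSet (n / 2) s := by
  let double : Fin (n / 2) ↪ Fin n :=
    ⟨fun i => ⟨2 * i, by omega⟩, fun i j h => by simpa [Fin.ext_iff] using h⟩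
  have val_double (i : Fin (n / 2)) : (double i).val = 2 * i := rfl
  refine ⟨Finset.univ.map double, ?_, by simp⟩
  rw [isIndepSet_map_iff_comap, isIndepSet_iff_forall_not_adj]
  intro i _ j _
  rw [comap_adj, cycleGraph_adj_iff_val hn, val_double, val_double]
  omega

theorem indepNum_cycleGraph {n : ℕ} (hn : 2 ≤ n) : (cycleGraph n).indepNum = n / 2 := by
  apply le_antisymm
  · obtain ⟨s, hs⟩ := (cycleGraph n).exists_isNIndepSet_indepNum
    have := two_mul_card_le_of_isIndepSet_cycleGraph hn hs.isIndepSet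
    have := hs.card_eq
    omega
  · obtain ⟨s, hs⟩ := exists_isNIndepSet_cycleGraph hn
    exact hs.card_eq ▸ hs.isIndepSet.card_le_indepNum

end PathAndCycle

section Chebyshev

lemma chebyshev_C_eq_S_sub_S {R : Type*} [CommRing R] (n : ℤ) :
    Chebyshev.C R n = Chebyshev.S R n - Chebyshev.S R (n - 2) := by
  rw [Chebyshev.C_eq_S_sub_X_mul_S, Chebyshev.S_sub_two]
  ring

variable {x y : ℝ}

lemma pow_mul_eval_indepPolyR_pathGraph (hxy : x * y ^ 2 = -1) (n : ℕ) :
    y ^ (n + 1) * (indepPolyR (pathGraph n)).eval x = (Chebyshev.S ℝ (n + 1)).eval y := by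
  induction n using Nat.twoStepInduction with
  | zero => simp [indepPolyR_pathGraph_zero]
  | one =>
    rw [indepPolyR_pathGraph_one, show ((1 : ℕ) + 1 : ℤ) = 2 from rfl,
      Chebyshev.S_two]
    simp only [eval_add, eval_sub, eval_pow, eval_X, eval_one]
    linear_combination hxy
  | more n ih₀ ih₁ =>
    have recurrence : (Chebyshev.S ℝ ((n + 2 : ℕ) + 1)).eval y =
        y * (Chebyshev.S ℝ ((n + 1 : ℕ) + 1)).eval y - (Chebyshev.S ℝ (n + 1)).eval y := by
      rw [show ((n + 2 : ℕ) + 1 : ℤ) = (n + 1) + 2 by push_cast; ring, Chebyshev.S_add_two]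
      simp
    rw [recurrence, ← ih₀, ← ih₁, indepPolyR_pathGraph_add_two, eval_add, eval_mul, eval_X]
    linear_combination y ^ (n + 1) * (indepPolyR (pathGraph n)).eval x * hxy

theorem pow_mul_eval_indepPolyR_cycleGraph (hxy : x * y ^ 2 = -1) {n : ℕ} (hn : 3 ≤ n) :
    y ^ n * (indepPolyR (cycleGraph n)).eval x = (Chebyshev.C ℝ n).eval y := by
  obtain ⟨m, rfl⟩ := Nat.exists_eq_add_of_le' hn
  have h₂ := pow_mul_eval_indepPolyR_pathGraph hxy (m + 2)
  have h₀ := pow_mul_eval_indepPolyR_pathGraph hxy m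
  rw [chebyshev_C_eq_S_sub_S, eval_sub,
    show ((m + 3 : ℕ) : ℤ) - 2 = m + 1 by push_cast; ring,
    show ((m + 3 : ℕ) : ℤ) = (m + 2 : ℕ) + 1 by push_cast; ring, ← h₂, ← h₀,
    indepPolyR_cycleGraph_add_three, eval_add, eval_mul, eval_X]
  linear_combination y ^ (m + 1) * (indepPolyR (pathGraph m)).eval x * hxy

end Chebyshev

section CycleRoot

variable {n i : ℕ}

/-- The angle `φ` with `cycleRoot n i = -1 / (2 cos φ) ^ 2`, half of the one in `cycleRoot`;
`2 cos φ` is a zero of the Chebyshev polynomial `C_n`. -/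
noncomputable def cycleAngle (n i : ℕ) : ℝ :=
  (2 * (i : ℝ) - 1) * Real.pi / (2 * n)

lemma cycleRoot_eq_neg_inv_sq (n i : ℕ) :
    cycleRoot n i = -((2 * Real.cos (cycleAngle n i)) ^ 2)⁻¹ := by
  have two_mul_angle : (2 * (i : ℝ) - 1) * Real.pi / n = 2 * cycleAngle n i := by
    rw [cycleAngle]; ring
  rw [cycleRoot, two_mul_angle, Real.cos_two_mul, one_div]
  ring

lemma cos_mul_cycleAngle (hn : n ≠ 0) (i : ℕ) : Real.cos (n * cycleAngle n i) = 0 := by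
  rw [Real.cos_eq_zero_iff]
  refine ⟨i - 1, ?_⟩
  rw [cycleAngle]
  push_cast
  field_simp
  ring

lemma cycleAngle_mem_Ioo (hi : i ∈ Finset.Icc 1 (n / 2)) :
    cycleAngle n i ∈ Set.Ioo 0 (Real.pi / 2) := by
  obtain ⟨one_le, le_half⟩ := Finset.mem_Icc.1 hi
  have one_le' : (1 : ℝ) ≤ i := by exact_mod_cast one_le
  have two_mul_le : (2 * i : ℝ) ≤ n := by exact_mod_cast (show 2 * i ≤ n by omega)
  have num_pos : (0 : ℝ) < 2 * i - 1 := by linarith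
  have n_pos : (0 : ℝ) < n := by linarith
  have num_lt : (2 * i : ℝ) - 1 < n := by linarith
  refine ⟨by unfold cycleAngle; positivity, ?_⟩
  rw [cycleAngle, div_lt_div_iff₀ (by positivity) two_pos]
  linarith [mul_lt_mul_of_pos_right num_lt Real.pi_pos]

lemma cos_cycleAngle_pos (hi : i ∈ Finset.Icc 1 (n / 2)) : 0 < Real.cos (cycleAngle n i) :=
  have h := cycleAngle_mem_Ioo hi
  Real.cos_pos_of_mem_Ioo ⟨by linarith [h.1, h.2], h.2⟩

theorem strictAntiOn_cycleRoot (n : ℕ) :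
    StrictAntiOn (cycleRoot n) (Finset.Icc 1 (n / 2)) := by
  intro i hi j hj hij
  have hφi := cycleAngle_mem_Ioo hi
  have hφj := cycleAngle_mem_Ioo hj
  have cos_pos := cos_cycleAngle_pos hj
  have angle_lt : cycleAngle n i < cycleAngle n j := by
    have n_pos : (0 : ℝ) < n := by
      have := Finset.mem_Icc.1 hi
      exact_mod_cast (show 0 < n by omega)
    unfold cycleAngle
    gcongr
  have cos_lt := Real.cos_lt_cos_of_nonneg_of_le_pi_div_two hφi.1.le hφj.2.le angle_lt
  rw [cycleRoot_eq_neg_inv_sq, cycleRoot_eq_neg_inv_sq]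
  gcongr

theorem eval_cycleRoot_indepPolyR_cycleGraph (hn : 3 ≤ n) (hi : i ∈ Finset.Icc 1 (n / 2)) :
    (indepPolyR (cycleGraph n)).eval (cycleRoot n i) = 0 := by
  have cos_ne_zero := (cos_cycleAngle_pos hi).ne'
  have root_mul_sq : cycleRoot n i * (2 * Real.cos (cycleAngle n i)) ^ 2 = -1 := by
    rw [cycleRoot_eq_neg_inv_sq]
    field_simp
  have scaled_eval := pow_mul_eval_indepPolyR_cycleGraph root_mul_sq hn
  rw [Chebyshev.C_two_mul_real_cos, Int.cast_natCast, cos_mul_cycleAngle (by omega),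
    mul_zero] at scaled_eval
  exact (mul_eq_zero.1 scaled_eval).resolve_left (by positivity)

end CycleRoot

theorem cycle_indepPoly_roots (n : ℕ) (hn : 3 ≤ n) :
    (∀ i ∈ Finset.Icc 1 (n / 2), ∀ j ∈ Finset.Icc 1 (n / 2), i ≠ j →
        cycleRoot n i ≠ cycleRoot n j) ∧
    (∀ i ∈ Finset.Icc 1 (n / 2),
        Polynomial.eval (cycleRoot n i) (indepPolyR (SimpleGraph.cycleGraph n)) = 0) ∧
    (indepPolyR (SimpleGraph.cycleGraph n)).natDegree = n / 2 := by
  refine ⟨fun i hi j hj hij => (strictAntiOn_cycleRoot n).injOn.ne hi hj hij,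
    fun i hi => eval_cycleRoot_indepPolyR_cycleGraph hn hi, ?_⟩
  rw [natDegree_indepPolyR, indepNum_cycleGraph (by omega)]
end
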